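/- Over F = ℚ(q,u), the R-matrix R̄ obeys the unitarity property R̄_{12}(u) · R̄_{21}(u^{−1}) = Id on V ⊗ V, i.e., R̄(u) · (P · R̄(1/u) · P) = Id, where P = Σ_{i,j=1}^{2n} e_{ij}⊗e_{ji} is the flip operator. -/

import Mathlib

/-!
The space `V ⊗ V` splits into the span of the vectors `e_{i′} ⊗ e_i`, the lines `e_i ⊗ e_i`, and
the planes spanned by `e_a ⊗ e_b` and `e_b ⊗ e_a` with `a ≠ b, b′`. Both factors preserve this
decomposition. On the lines the product is `1 * 1`, and on the planes it is a product of two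
explicit `2 × 2` matrices, so only the exceptional block `(a_{ij}(u))` needs work: the claim there is
`∑_k a_{ik}(u) a_{k′j′}(u⁻¹) = δ_{ij} (u - q⁻²)(u - ξ)(u⁻¹ - q⁻²)(u⁻¹ - ξ)` (`aEnt_sum`).

Put `p = q⁻²` and `H_i(k) = (p-1)[k < i] + p[k = i]`. Then (`aEnt_eq`, `aEnt_prime_eq`)
`a_{ik}(u) = (u-1) q^{ī - k̄} ((p-1)ξ + (u-ξ) H_i(k)) + (1-p)(u-ξ) c_i(u) [k = i′]`,
where `c_i(u)` is `1` in the first half of the indices and `u` in the second, and `a_{k′j′}` has the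
analogous form with `H_j(k)`. The product therefore reduces to the sums of `p^{k̄}`,
`p^{k̄} H_i(k)` and `p^{k̄} H_i(k) H_j(k)` over `k`. The geometric sum for `∑_{k<i} p^{k̄}` evaluates
the second one to `h_i = -ξ - (1-p)[i in the second half]` (`sum_t_hFun`), the third one to
`(p-1) h_{min(i,j)} + δ_{ij} p^{1+ī}` (`sum_t_hFun_mul_of_lt`, `sum_t_hFun_mul_self`), and
`p - 1` times the first one to `(p-1) - ξ + p/ξ` (`sum_t`). What is left is an identity of
rational functions.
-/

noncomputable section

open Matrix Kronecker

/-- `primeIdx n i` is the 0-based version of the primed index `i′ = 2n+1−i` (1-based). -/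
def primeIdx (n : ℕ) (i : Fin (2*n)) : Fin (2*n) :=
  ⟨2*n - 1 - i.val, by have := i.isLt; omega⟩

/-- `barIdx n i` is `ī`: `n−i` for `1 ≤ i ≤ n` and `n+1−i` for `n+1 ≤ i ≤ 2n` (1-based). -/
def barIdx (n : ℕ) (i : Fin (2*n)) : ℤ :=
  if i.val < n then (n : ℤ) - 1 - i.val else (n : ℤ) - i.val

/-- `ξ = −q^{−2n}`. -/
def xiVal {F : Type*} [Field F] (n : ℕ) (q : F) : F := -q ^ (-(2 * (n : ℤ)))

/-- The entries `a_{ij}(u)` of the exceptional block of the R-matrix. -/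
def aEnt {F : Type*} [Field F] (n : ℕ) (q xi u : F) (i j : Fin (2*n)) : F :=
  if i = j then (q ^ (-2 : ℤ) * u - xi) * (u - 1)
  else if i.val < j.val then
    (q ^ (-2 : ℤ) - 1) *
      (q ^ (barIdx n i - barIdx n j) * xi * (u - 1)
        - (if i = primeIdx n j then (1 : F) else 0) * (u - xi))
  else
    (q ^ (-2 : ℤ) - 1) * u *
      (q ^ (barIdx n i - barIdx n j) * (u - 1)
        - (if i = primeIdx n j then (1 : F) else 0) * (u - xi))

/-- The R-matrix `R̄(u)` of type `A^{(2)}_{2n−1}` (with the parameter `ξ` explicit). -/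
def Rbar {F : Type*} [Field F] (n : ℕ) (q xi u : F) :
    Matrix (Fin (2*n) × Fin (2*n)) (Fin (2*n) × Fin (2*n)) F :=
  fun p r =>
    (if p.1 = p.2 ∧ p.1 = r.1 ∧ p.1 = r.2 then (1 : F) else 0)
    + (if p.1 = r.1 ∧ p.2 = r.2 ∧ p.1 ≠ p.2 ∧ p.1 ≠ primeIdx n p.2 then
        (u - 1) / (q * u - q⁻¹) else 0)
    + (if p.1 = r.2 ∧ p.2 = r.1 ∧ p.2.val < p.1.val ∧ p.1 ≠ primeIdx n p.2 then
        (q - q⁻¹) / (q * u - q⁻¹) else 0)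
    + (if p.1 = r.2 ∧ p.2 = r.1 ∧ p.1.val < p.2.val ∧ p.1 ≠ primeIdx n p.2 then
        (q - q⁻¹) * u / (q * u - q⁻¹) else 0)
    + (if p.1 = primeIdx n p.2 ∧ r.1 = primeIdx n r.2 then
        aEnt n q xi u p.2 r.2 / ((u - q ^ (-2 : ℤ)) * (u - xi)) else 0)

/-- Primed partial transpose in the first tensor factor. -/
def pt1 {F : Type*} [Field F] (n : ℕ)
    (X : Matrix (Fin (2*n) × Fin (2*n)) (Fin (2*n) × Fin (2*n)) F) :
    Matrix (Fin (2*n) × Fin (2*n)) (Fin (2*n) × Fin (2*n)) F :=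
  fun p r => X (primeIdx n r.1, p.2) (primeIdx n p.1, r.2)

/-- The flip operator `P = Σ e_{ij}⊗e_{ji}`. -/
def Pmat {F : Type*} [Field F] (n : ℕ) :
    Matrix (Fin (2*n) × Fin (2*n)) (Fin (2*n) × Fin (2*n)) F :=
  fun p r => if p.1 = r.2 ∧ p.2 = r.1 then (1 : F) else 0

/-! ### Primed indices and the exponents `ī` -/

theorem primeIdx_val (n : ℕ) (i : Fin (2*n)) : (primeIdx n i).val = 2*n - 1 - i.val := rfl

theorem primeIdx_primeIdx (n : ℕ) (i : Fin (2*n)) : primeIdx n (primeIdx n i) = i := by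
  apply Fin.ext
  have := i.isLt
  simp only [primeIdx_val]
  omega

theorem eq_primeIdx_comm (n : ℕ) (i j : Fin (2*n)) : i = primeIdx n j ↔ j = primeIdx n i := by
  constructor <;> (rintro rfl; rw [primeIdx_primeIdx])

theorem primeIdx_ne (n : ℕ) (i : Fin (2*n)) : primeIdx n i ≠ i := by
  intro h
  have := congrArg Fin.val h
  have := i.isLt
  rw [primeIdx_val] at *
  omega

theorem barIdx_primeIdx (n : ℕ) (i : Fin (2*n)) : barIdx n (primeIdx n i) = -barIdx n i := by
  have := i.isLt
  unfold barIdx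
  rw [primeIdx_val]
  split_ifs <;> omega

/-! ### The geometric sums -/

/-- `H_i(k) = (p-1)[k < i] + p[k = i]`. -/
def hFun {F : Type*} [Field F] {m : ℕ} (p : F) (i k : Fin m) : F :=
  if k < i then p - 1 else if k = i then p else 0

/-- `h_i`, the value of `∑_k p^{k̄} H_i(k)`: it is `-ξ` for `i` in the first half of the indices
and `-ξ - (1-p)` for `i` in the second half. -/
def hVal {F : Type*} [Field F] (n : ℕ) (p xi : F) (i : Fin (2*n)) : F :=
  if i.val < n then -xi else -xi - (1 - p)

/-- The factor `c_i(u)` of the entry `a_{i i′}`. -/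
def cFun {F : Type*} [Field F] (n : ℕ) (u : F) (i : Fin (2*n)) : F :=
  if i.val < n then 1 else u

/-- `(1-p) ∑_{k<m} p^{k̄}`, with `k̄` written as a function of the 0-based index `k`. -/
theorem geom_range {F : Type*} [Field F] (n : ℕ) (p : F) (hp : p ≠ 0) (m : ℕ) :
    (1 - p) * ∑ k ∈ Finset.range m,
        p ^ (if k < n then (n : ℤ) - 1 - k else (n : ℤ) - k) =
      if m ≤ n then p ^ ((n : ℤ) - m) - p ^ (n : ℤ)
      else 1 - p ^ (n : ℤ) + p ^ ((n : ℤ) - m + 1) - p := by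
  induction m with
  | zero => simp
  | succ m ih =>
    rw [Finset.sum_range_succ, mul_add, ih]
    rcases lt_trichotomy m n with h | h | h
    · rw [if_pos h.le, if_pos h, if_pos (by omega : m + 1 ≤ n)]
      have e : (n : ℤ) - m = ((n : ℤ) - 1 - m) + 1 := by ring
      have e' : (n : ℤ) - ((m + 1 : ℕ) : ℤ) = (n : ℤ) - 1 - m := by push_cast; ring
      rw [e', e, zpow_add_one₀ hp]
      ring
    · subst h
      simp [add_sub_assoc]
    · rw [if_neg (by omega), if_neg (by omega), if_neg (by omega)]
      have e' : (n : ℤ) - ((m + 1 : ℕ) : ℤ) + 1 = (n : ℤ) - m := by push_cast; ring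
      rw [e', zpow_add_one₀ hp]
      ring

theorem sum_t_lt {F : Type*} [Field F] (n : ℕ) (p : F) (hp : p ≠ 0) (i : Fin (2*n)) :
    (1 - p) * ∑ k : Fin (2*n), (if k < i then p ^ barIdx n k else 0) =
      p * p ^ barIdx n i - p ^ (n : ℤ) + (if i.val < n then 0 else 1 - p) := by
  have hi := i.isLt
  have e : ∑ k : Fin (2*n), (if k < i then p ^ barIdx n k else 0) =
      ∑ k ∈ Finset.range i.val, p ^ (if k < n then (n : ℤ) - 1 - k else (n : ℤ) - k) := by
    have := Fin.sum_univ_eq_sum_range (fun k => if k < i.val then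
      p ^ (if k < n then (n : ℤ) - 1 - k else (n : ℤ) - k) else 0) (2*n)
    refine this.trans ?_
    rw [← Finset.sum_filter]
    congr 1
    ext k
    simp only [Finset.mem_filter, Finset.mem_range]
    omega
  rw [e, geom_range n p hp]
  unfold barIdx
  rcases lt_trichotomy i.val n with h | h | h
  · rw [if_pos h.le, if_pos h, if_pos h, ← zpow_one_add₀ hp]
    ring_nf
  · simp [h]
  · rw [if_neg (by omega), if_neg (by omega), if_neg (by omega), zpow_add_one₀ hp]
    ring

theorem sum_t {F : Type*} [Field F] (n : ℕ) (hn : 2 ≤ n) (p : F) (hp : p ≠ 0) :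
    (1 - p) * ∑ k : Fin (2*n), p ^ barIdx n k =
      1 - p ^ (n : ℤ) - p + p / p ^ (n : ℤ) := by
  have e : ∑ k : Fin (2*n), p ^ barIdx n k =
      ∑ k ∈ Finset.range (2*n), p ^ (if k < n then (n : ℤ) - 1 - k else (n : ℤ) - k) :=
    Fin.sum_univ_eq_sum_range (fun k =>
      p ^ (if k < n then (n : ℤ) - 1 - k else (n : ℤ) - k)) (2*n)
  have e2 : (n : ℤ) - ((2 * n : ℕ) : ℤ) + 1 = 1 - n := by push_cast; ring
  rw [e, geom_range n p hp, if_neg (by omega), e2, zpow_sub₀ hp, zpow_one]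
  ring

theorem sum_t_hFun {F : Type*} [Field F] (n : ℕ) (p : F) (hp : p ≠ 0) (i : Fin (2*n)) :
    ∑ k : Fin (2*n), p ^ barIdx n k * hFun p i k = hVal n p (-p ^ (n : ℤ)) i := by
  have e : ∀ k : Fin (2*n), p ^ barIdx n k * hFun p i k =
      -((1 - p) * (if k < i then p ^ barIdx n k else 0)) +
        (if k = i then p * p ^ barIdx n k else 0) := by
    intro k
    unfold hFun
    rcases lt_trichotomy k i with h | h | h
    · simp [h, h.ne]; ring
    · simp [h]; ring
    · simp [h.not_gt, h.ne']
  rw [Finset.sum_congr rfl (fun k _ => e k), Finset.sum_add_distrib, Finset.sum_neg_distrib,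
    ← Finset.mul_sum, sum_t_lt n p hp, Finset.sum_ite_eq' Finset.univ i, if_pos (Finset.mem_univ _)]
  unfold hVal
  split_ifs <;> ring

/-- For `i < j`, `H_j` is the constant `p - 1` on the support of `H_i`. -/
theorem sum_t_hFun_mul_of_lt {F : Type*} [Field F] (n : ℕ) (p : F) (hp : p ≠ 0)
    (i j : Fin (2*n)) (hij : i < j) :
    ∑ k : Fin (2*n), p ^ barIdx n k * (hFun p i k * hFun p j k) =
      (p - 1) * hVal n p (-p ^ (n : ℤ)) i := by
  rw [← sum_t_hFun n p hp, Finset.mul_sum]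
  refine Finset.sum_congr rfl fun k _ => ?_
  unfold hFun
  rcases lt_trichotomy k i with h | h | h
  · simp [h, h.trans hij]; ring
  · subst h; simp [hij]; ring
  · simp [h.not_gt, h.ne']

theorem sum_t_hFun_mul_self {F : Type*} [Field F] (n : ℕ) (p : F) (hp : p ≠ 0)
    (i : Fin (2*n)) :
    ∑ k : Fin (2*n), p ^ barIdx n k * (hFun p i k * hFun p i k) =
      (p - 1) * hVal n p (-p ^ (n : ℤ)) i + p * p ^ barIdx n i := by
  have e : ∀ k : Fin (2*n), p ^ barIdx n k * (hFun p i k * hFun p i k) =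
      (p - 1) * (p ^ barIdx n k * hFun p i k) + (if k = i then p * p ^ barIdx n k else 0) := by
    intro k
    unfold hFun
    rcases lt_trichotomy k i with h | h | h
    · simp [h, h.ne]; ring
    · simp [h]; ring
    · simp [h.not_gt, h.ne']
  rw [Finset.sum_congr rfl (fun k _ => e k), Finset.sum_add_distrib,
    ← Finset.mul_sum, sum_t_hFun n p hp, Finset.sum_ite_eq' Finset.univ i,
    if_pos (Finset.mem_univ _)]

/-! ### The exceptional block -/

theorem aEnt_eq {F : Type*} [Field F] (n : ℕ) (q xi u : F) (hq : q ≠ 0) (i k : Fin (2*n)) :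
    aEnt n q xi u i k =
      (u - 1) * (q ^ barIdx n i * (q ^ barIdx n k)⁻¹) *
        ((q ^ (-2 : ℤ) - 1) * xi + (u - xi) * hFun (q ^ (-2 : ℤ)) i k) +
      (if k = primeIdx n i then (1 - q ^ (-2 : ℤ)) * (u - xi) * cFun n u i else 0) := by
  have hw : q ^ barIdx n i ≠ 0 := zpow_ne_zero _ hq
  unfold aEnt hFun
  rw [zpow_sub₀ hq]
  simp only [eq_primeIdx_comm n i k, div_eq_mul_inv]
  rcases lt_trichotomy i k with h | h | h
  · have hv : i.val < k.val := h
    rw [if_neg h.ne, if_pos hv, if_neg h.not_gt, if_neg h.ne']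
    by_cases hk : k = primeIdx n i
    · have : i.val < n := by
        have := congrArg Fin.val hk
        rw [primeIdx_val] at this
        omega
      simp only [if_pos hk, cFun, if_pos this]; ring
    · simp only [if_neg hk]; ring
  · subst h
    rw [if_pos rfl, if_neg (lt_irrefl _), if_pos rfl, if_neg (primeIdx_ne n i).symm,
      mul_inv_cancel₀ hw]
    ring
  · have hv : k.val < i.val := h
    rw [if_neg h.ne', if_neg (by omega), if_pos h]
    by_cases hk : k = primeIdx n i
    · have : ¬ i.val < n := by
        have := congrArg Fin.val hk
        rw [primeIdx_val] at this
        omega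
      simp only [if_pos hk, cFun, if_neg this]; ring
    · simp only [if_neg hk]; ring

/-- The entries with both indices primed. Here `H_{k′}(j′)` turns into `H_j(k)` because `i ↦ i′`
reverses the order. -/
theorem aEnt_prime_eq {F : Type*} [Field F] (n : ℕ) (q xi v : F) (hq : q ≠ 0)
    (k j : Fin (2*n)) :
    aEnt n q xi v (primeIdx n k) (primeIdx n j) =
      (v - 1) * (q ^ barIdx n j * (q ^ barIdx n k)⁻¹) *
        ((q ^ (-2 : ℤ) - 1) * xi + (v - xi) * hFun (q ^ (-2 : ℤ)) j k) +
      (if k = primeIdx n j then (1 - q ^ (-2 : ℤ)) * (v - xi) * cFun n v j else 0) := by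
  have hk := k.isLt
  have hj := j.isLt
  rw [aEnt_eq n q xi v hq, barIdx_primeIdx, barIdx_primeIdx, primeIdx_primeIdx, _root_.zpow_neg, _root_.zpow_neg,
    inv_inv]
  have e1 : hFun (q ^ (-2 : ℤ)) (primeIdx n k) (primeIdx n j) = hFun (q ^ (-2 : ℤ)) j k := by
    unfold hFun
    simp only [Fin.lt_def, Fin.ext_iff, primeIdx_val]
    congr 1
    · apply propext; omega
    · congr 1
      apply propext; omega
  have e2 : (if primeIdx n j = k then (1 - q ^ (-2 : ℤ)) * (v - xi) * cFun n v (primeIdx n k)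
      else 0) =
      (if k = primeIdx n j then (1 - q ^ (-2 : ℤ)) * (v - xi) * cFun n v j else 0) := by
    by_cases h : k = primeIdx n j
    · rw [if_pos h, if_pos h.symm, h, primeIdx_primeIdx]
    · rw [if_neg h, if_neg (Ne.symm h)]
  rw [e1, e2]
  ring

/-- The inverse relation for the exceptional block, before dividing by the denominators. -/
theorem aEnt_sum {F : Type*} [Field F] (n : ℕ) (hn : 2 ≤ n) (q u : F) (hq : q ≠ 0) (hu : u ≠ 0)
    (i j : Fin (2*n)) :
    ∑ k : Fin (2*n), aEnt n q (xiVal n q) u i k *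
        aEnt n q (xiVal n q) u⁻¹ (primeIdx n k) (primeIdx n j) =
      if i = j then (u - q ^ (-2 : ℤ)) * (u - xiVal n q) *
        ((u⁻¹ - q ^ (-2 : ℤ)) * (u⁻¹ - xiVal n q)) else 0 := by
  have hxi : xiVal n q = -(q ^ (-2 : ℤ)) ^ (n : ℤ) := by
    rw [xiVal, ← _root_.zpow_mul]; congr 2
  have hp : q ^ (-2 : ℤ) ≠ 0 := zpow_ne_zero _ hq
  have hx0 : xiVal n q ≠ 0 := by rw [hxi]; exact neg_ne_zero.2 (zpow_ne_zero _ hp)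
  have ht : ∀ k : Fin (2*n), (q ^ barIdx n k)⁻¹ * (q ^ barIdx n k)⁻¹ =
      (q ^ (-2 : ℤ)) ^ barIdx n k := by
    intro k
    rw [← _root_.zpow_mul, ← _root_.zpow_neg, ← zpow_add₀ hq]; congr 1; ring
  have s0 := sum_t n hn _ hp
  have s1 := sum_t_hFun n _ hp i
  have s1' := sum_t_hFun n _ hp j
  have s2 : ∑ k : Fin (2*n), (q ^ (-2 : ℤ)) ^ barIdx n k *
        (hFun (q ^ (-2 : ℤ)) i k * hFun (q ^ (-2 : ℤ)) j k) =
      (q ^ (-2 : ℤ) - 1) * hVal n (q ^ (-2 : ℤ)) (xiVal n q) (min i j) +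
        if i = j then q ^ (-2 : ℤ) * (q ^ (-2 : ℤ)) ^ barIdx n i else 0 := by
    rw [hxi]
    rcases lt_trichotomy i j with h | h | h
    · rw [sum_t_hFun_mul_of_lt n _ hp i j h, if_neg h.ne, min_eq_left h.le, add_zero]
    · subst h
      rw [sum_t_hFun_mul_self n _ hp i, if_pos rfl, min_self]
    · rw [Finset.sum_congr rfl (fun k _ => by rw [mul_comm (hFun _ i k)]),
        sum_t_hFun_mul_of_lt n _ hp j i h, if_neg h.ne', min_eq_right h.le, add_zero]
  rw [show (q ^ (-2 : ℤ)) ^ (n : ℤ) = -xiVal n q by rw [hxi, neg_neg]] at s0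
  rw [← hxi] at s1 s1'
  have htw := ht i
  have hw : q ^ barIdx n i ≠ 0 := zpow_ne_zero _ hq
  have hbi : q ^ barIdx n (primeIdx n i) = (q ^ barIdx n i)⁻¹ := by
    rw [barIdx_primeIdx, _root_.zpow_neg]
  have hbj : q ^ barIdx n (primeIdx n j) = (q ^ barIdx n j)⁻¹ := by
    rw [barIdx_primeIdx, _root_.zpow_neg]
  -- From here on only the formal properties of `p = q⁻²` and `ξ` matter.
  generalize hpd : q ^ (-2 : ℤ) = p at *
  generalize xiVal n q = x at *
  have expand : ∀ k : Fin (2*n), aEnt n q x u i k *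
        aEnt n q x u⁻¹ (primeIdx n k) (primeIdx n j) =
      (u - 1) * (u⁻¹ - 1) * (q ^ barIdx n i * q ^ barIdx n j) *
        ((p - 1) ^ 2 * x ^ 2 * p ^ barIdx n k +
          (p - 1) * x * (u - x) * (p ^ barIdx n k * hFun p i k) +
          (p - 1) * x * (u⁻¹ - x) * (p ^ barIdx n k * hFun p j k) +
          (u - x) * (u⁻¹ - x) * (p ^ barIdx n k * (hFun p i k * hFun p j k))) +
      (if k = primeIdx n j then
        (u - 1) * (q ^ barIdx n i * q ^ barIdx n j) * ((p - 1) * x + (u - x) * hFun p i k) *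
          ((1 - p) * (u⁻¹ - x) * cFun n u⁻¹ j) else 0) +
      (if k = primeIdx n i then
        (u⁻¹ - 1) * (q ^ barIdx n i * q ^ barIdx n j) * ((p - 1) * x + (u⁻¹ - x) * hFun p j k) *
          ((1 - p) * (u - x) * cFun n u i) +
        (if i = j then (1 - p) ^ 2 * (u - x) * (u⁻¹ - x) * (cFun n u i * cFun n u⁻¹ j)
          else 0) else 0) := by
    intro k
    rw [aEnt_eq n q x u hq, aEnt_prime_eq n q x u⁻¹ hq, hpd, ← ht k]
    by_cases hi : k = primeIdx n i
    · by_cases hj : k = primeIdx n j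
      · have hij : i = j := by
          rw [← primeIdx_primeIdx n i, ← hi, hj, primeIdx_primeIdx]
        subst hij
        simp only [if_pos hi, if_true]
        rw [hi, hbi, inv_inv]
        ring
      · have hij : i ≠ j := by rintro rfl; exact hj hi
        simp only [if_pos hi, if_neg hj, if_neg hij]
        rw [hi, hbi, inv_inv]
        ring
    · by_cases hj : k = primeIdx n j
      · simp only [if_neg hi, if_pos hj]
        rw [hj, hbj, inv_inv]
        ring
      · simp only [if_neg hi, if_neg hj]
        ring
  rw [Finset.sum_congr rfl (fun k _ => expand k)]
  simp only [Finset.sum_add_distrib, ← Finset.mul_sum]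
  rw [s1, s1', s2, Finset.sum_ite_eq' Finset.univ (primeIdx n j),
    Finset.sum_ite_eq' Finset.univ (primeIdx n i), if_pos (Finset.mem_univ _),
    if_pos (Finset.mem_univ _)]
  have s0' : (p - 1) ^ 2 * x ^ 2 * ∑ k : Fin (2*n), p ^ barIdx n k =
      (p - 1) * x * ((p - 1) * x - x ^ 2 + p) := by
    calc _ = -(p - 1) * x ^ 2 * ((1 - p) * ∑ k : Fin (2*n), p ^ barIdx n k) := by ring
      _ = _ := by rw [s0]; field_simp; ring
  rw [s0', ← htw]
  have hi := i.isLt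
  have hj := j.isLt
  have key : hFun p i (primeIdx n j) =
      if 2 * n - 1 < i.val + j.val then p - 1 else if i.val + j.val = 2 * n - 1 then p else 0 := by
    unfold hFun
    simp only [Fin.lt_def, Fin.ext_iff, primeIdx_val]
    congr 1
    · apply propext; omega
    · congr 1
      apply propext; omega
  have key' : hFun p j (primeIdx n i) =
      if 2 * n - 1 < i.val + j.val then p - 1 else if i.val + j.val = 2 * n - 1 then p else 0 := by
    unfold hFun
    simp only [Fin.lt_def, Fin.ext_iff, primeIdx_val]
    congr 1
    · apply propext; omega
    · congr 1
      apply propext; omega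
  rw [key, key']
  by_cases hij : i = j
  · subst hij
    simp only [min_self, if_true, hVal, cFun]
    by_cases hin : i.val < n
    · simp only [if_pos hin, if_neg (show ¬ 2 * n - 1 < i.val + i.val by omega),
        if_neg (show ¬ i.val + i.val = 2 * n - 1 by omega)]
      field_simp
      ring
    · simp only [if_neg hin, if_pos (show 2 * n - 1 < i.val + i.val by omega)]
      field_simp
      ring
  · have hmin : (min i j).val < n ↔ i.val < n ∨ j.val < n := by
      rcases le_total i j with h | h
      · have : i.val ≤ j.val := h
        rw [min_eq_left h]; omega
      · have : j.val ≤ i.val := h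
        rw [min_eq_right h]; omega
    simp only [if_neg hij, hVal, cFun, hmin]
    by_cases hin : i.val < n <;> by_cases hjn : j.val < n
    · simp only [hin, hjn, or_self, if_true, if_neg (show ¬ 2 * n - 1 < i.val + j.val by omega),
        if_neg (show ¬ i.val + j.val = 2 * n - 1 by omega)]
      field_simp
      ring
    · simp only [hin, hjn, true_or, if_true, if_false]
      split_ifs <;> field_simp <;> ring
    · simp only [hin, hjn, or_true, if_true, if_false]
      split_ifs <;> field_simp <;> ring
    · simp only [hin, hjn, or_self, if_false, if_pos (show 2 * n - 1 < i.val + j.val by omega)]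
      field_simp
      ring

/-! ### The rows of `R̄(u)` -/

/-- The coefficient of `e_{ab} ⊗ e_{ba}` in `R̄(u)`, for `a ≠ b, b′`. -/
def betaFun {F : Type*} [Field F] {m : ℕ} (q u : F) (a b : Fin m) : F :=
  if b < a then (q - q⁻¹) / (q * u - q⁻¹) else (q - q⁻¹) * u / (q * u - q⁻¹)

theorem Rbar_row_exc {F : Type*} [Field F] (n : ℕ) (q xi u : F) (i : Fin (2*n))
    (r : Fin (2*n) × Fin (2*n)) :
    Rbar n q xi u (primeIdx n i, i) r =
      if r.1 = primeIdx n r.2 then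
        aEnt n q xi u i r.2 / ((u - q ^ (-2 : ℤ)) * (u - xi)) else 0 := by
  simp [Rbar, primeIdx_ne]

theorem Rbar_row_diag {F : Type*} [Field F] (n : ℕ) (q xi u : F) (a : Fin (2*n))
    (r : Fin (2*n) × Fin (2*n)) :
    Rbar n q xi u (a, a) r = if r = (a, a) then 1 else 0 := by
  obtain ⟨c, d⟩ := r
  simp [Rbar, (primeIdx_ne n a).symm, Prod.ext_iff, eq_comm]

theorem Rbar_row_gen {F : Type*} [Field F] (n : ℕ) (q xi u : F) (a b : Fin (2*n))
    (hab : a ≠ b) (hab' : a ≠ primeIdx n b) (r : Fin (2*n) × Fin (2*n)) :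
    Rbar n q xi u (a, b) r =
      (if r = (a, b) then (u - 1) / (q * u - q⁻¹) else 0) +
      (if r = (b, a) then betaFun q u a b else 0) := by
  obtain ⟨c, d⟩ := r
  simp only [Rbar, betaFun, Prod.ext_iff, hab, hab', false_and, if_false, zero_add, add_zero, ne_eq,
    not_false_eq_true, and_true, ← Fin.lt_def, eq_comm (a := a), eq_comm (a := b)]
  rcases lt_or_gt_of_ne hab with h | h
  · simp [h, h.not_gt, and_comm]
  · simp [h, h.not_gt, and_comm]

theorem Pmat_conj_apply {F : Type*} [Field F] (n : ℕ)
    (X : Matrix (Fin (2*n) × Fin (2*n)) (Fin (2*n) × Fin (2*n)) F)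
    (p r : Fin (2*n) × Fin (2*n)) :
    (Pmat n * X * Pmat n : Matrix (Fin (2*n) × Fin (2*n)) (Fin (2*n) × Fin (2*n)) F) p r =
      X p.swap r.swap := by
  have e1 : ∀ p s : Fin (2*n) × Fin (2*n),
      Pmat (F := F) n p s = if s = p.swap then 1 else 0 := by
    intro p s
    simp only [Pmat, Prod.ext_iff, Prod.fst_swap, Prod.snd_swap]
    congr 1
    apply propext
    constructor <;> (rintro ⟨h, h'⟩; exact ⟨h'.symm, h.symm⟩)
  have e2 : ∀ s : Fin (2*n) × Fin (2*n),
      Pmat (F := F) n s r = if s = r.swap then 1 else 0 := by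
    intro s
    rw [e1]
    congr 1
    apply propext
    constructor <;> (rintro rfl; rw [Prod.swap_swap])
  simp only [Matrix.mul_apply, e1 p, e2, ite_mul, mul_ite, one_mul, mul_one, zero_mul, mul_zero,
    Finset.sum_ite_eq', Finset.mem_univ, if_true]

/-- Unitarity: `R̄₁₂(u) · R̄₂₁(1/u) = Id`, i.e. `R̄(u) · (P R̄(1/u) P) = Id`. -/
theorem Rbar_unitarity
    {F : Type*} [Field F] (n : ℕ) (hn : 2 ≤ n) (q u : F) (hq : q ≠ 0) (hu : u ≠ 0)
    (h1 : q * u - q⁻¹ ≠ 0)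
    (h2 : u - q ^ (-2 : ℤ) ≠ 0)
    (h3 : u - xiVal n q ≠ 0)
    (h4 : q * u⁻¹ - q⁻¹ ≠ 0)
    (h5 : u⁻¹ - q ^ (-2 : ℤ) ≠ 0)
    (h6 : u⁻¹ - xiVal n q ≠ 0) :
    Rbar n q (xiVal n q) u * (Pmat n * Rbar n q (xiVal n q) u⁻¹ * Pmat n)
      = (1 : Matrix (Fin (2*n) × Fin (2*n)) (Fin (2*n) × Fin (2*n)) F) := by
  ext p r
  obtain ⟨a, b⟩ := p
  obtain ⟨c, d⟩ := r
  rw [Matrix.mul_apply, Matrix.one_apply]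
  simp only [Pmat_conj_apply]
  by_cases hexc : a = primeIdx n b
  · subst hexc
    simp only [Rbar_row_exc]
    rw [Fintype.sum_prod_type_right]
    -- Only `s = (k′, k)` contributes; the swapped row is then the exceptional row of `k′`.
    have e : ∀ k : Fin (2*n), ∑ l : Fin (2*n),
        (if l = primeIdx n k then aEnt n q (xiVal n q) u b k /
            ((u - q ^ (-2 : ℤ)) * (u - xiVal n q)) else 0) *
          Rbar n q (xiVal n q) u⁻¹ (Prod.swap (l, k)) (Prod.swap (c, d)) =
        (aEnt n q (xiVal n q) u b k / ((u - q ^ (-2 : ℤ)) * (u - xiVal n q))) *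
          (if d = primeIdx n c then aEnt n q (xiVal n q) u⁻¹ (primeIdx n k) c /
            ((u⁻¹ - q ^ (-2 : ℤ)) * (u⁻¹ - xiVal n q)) else 0) := by
      intro k
      simp only [ite_mul, zero_mul, Finset.sum_ite_eq', Finset.mem_univ, if_true]
      have := Rbar_row_exc n q (xiVal n q) u⁻¹ (primeIdx n k) (d, c)
      rw [primeIdx_primeIdx] at this
      rw [Prod.swap_prod_mk, Prod.swap_prod_mk, this]
    rw [Finset.sum_congr rfl (fun k _ => e k)]
    by_cases hc : d = primeIdx n c
    · obtain rfl := (eq_primeIdx_comm n d c).1 hc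
      simp only [if_pos hc, div_mul_div_comm]
      rw [← Finset.sum_div, aEnt_sum n hn q u hq hu]
      by_cases hbd : b = d
      · subst hbd
        rw [if_pos rfl, if_pos rfl, div_self]
        exact mul_ne_zero (mul_ne_zero h2 h3) (mul_ne_zero h5 h6)
      · rw [if_neg hbd, if_neg (fun h => hbd (congrArg Prod.snd h)), zero_div]
    · simp only [if_neg hc, mul_zero, Finset.sum_const_zero]
      rw [if_neg]
      intro h
      obtain ⟨h, h'⟩ := Prod.ext_iff.1 h
      simp only at h h'
      rw [← h, ← h', primeIdx_primeIdx] at hc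
      exact hc rfl
  · by_cases hab : a = b
    · subst hab
      simp only [Rbar_row_diag, ite_mul, one_mul, zero_mul, Finset.sum_ite_eq', Finset.mem_univ,
        if_true, Prod.swap_prod_mk]
      simp only [Prod.ext_iff]
      congr 1
      apply propext
      constructor <;> (rintro ⟨h, h'⟩; exact ⟨h'.symm, h.symm⟩)
    · have hexc' : b ≠ primeIdx n a := fun h => hexc ((eq_primeIdx_comm n b a).1 h)
      simp only [Rbar_row_gen n q _ u a b hab hexc, add_mul, ite_mul, zero_mul,
        Finset.sum_add_distrib, Finset.sum_ite_eq', Finset.mem_univ, if_true, Prod.swap_prod_mk,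
        Rbar_row_gen n q _ u⁻¹ a b hab hexc, Rbar_row_gen n q _ u⁻¹ b a (Ne.symm hab) hexc']
      have hd : (u - 1) / (q * u - q⁻¹) * ((u⁻¹ - 1) / (q * u⁻¹ - q⁻¹)) +
          betaFun q u a b * betaFun q u⁻¹ a b = 1 := by
        unfold betaFun
        split_ifs
        all_goals
          rw [div_mul_div_comm, div_mul_div_comm, ← add_div, div_eq_one_iff_eq (mul_ne_zero h1 h4)]
          field_simp
          ring
      have ho : (u - 1) / (q * u - q⁻¹) * betaFun q u⁻¹ b a +
          betaFun q u a b * ((u⁻¹ - 1) / (q * u⁻¹ - q⁻¹)) = 0 := by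
        unfold betaFun
        rcases lt_or_gt_of_ne hab with h | h
        all_goals
          simp only [h, h.not_gt, if_true, if_false]
          rw [div_mul_div_comm, div_mul_div_comm, ← add_div, div_eq_zero_iff]
          left
          field_simp
          ring
      have hne : ∀ x y : Fin (2*n), ((d, c) = (x, y)) ↔ ((c, d) = (y, x)) := by
        intro x y
        simp only [Prod.ext_iff, and_comm]
      simp only [hne]
      by_cases hr : (c, d) = (a, b)
      · have hr' : (c, d) ≠ (b, a) := fun h => hab (congrArg Prod.fst (hr.symm.trans h))
        rw [if_pos hr, if_neg hr', if_neg hr', if_pos hr, if_pos hr.symm]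
        simpa using hd
      · rw [if_neg hr, if_neg hr, if_neg (Ne.symm hr)]
        by_cases hr' : (c, d) = (b, a)
        · rw [if_pos hr', if_pos hr']
          simpa using ho
        · rw [if_neg hr', if_neg hr']
          simp

end
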